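/- arXiv:math/0606374 — 2 statements merged into one kernel-verified Lean document; each statement's English description precedes it below -/
import Mathlib

section
/- Let Q : F₂^m → F₂^n be a quadratic map which is effective (Q(w) = 0 implies w = 0) and Bockstein closed, with associated quadratic polynomials q₁,…,q_n ∈ F₂[x₁,…,x_m]. Then m ≤ n. Moreover, if m = n, then q₁,…,q_n, and any permutation of them, form a regular sequence in F₂[x₁,…,x_m]. -/
open MvPolynomial

/-- The polarization (associated bilinear map) of a map `Q`:
`B(x,y) = Q(x+y) + Q(x) + Q(y)`. -/
def qpolar {W V : Type*} [Add W] [Add V] (Q : W → V) (x y : W) : V :=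
  Q (x + y) + Q x + Q y

/-- `Q` is a quadratic map between `F₂`-vector spaces: its polarization is `F₂`-bilinear. -/
def IsQuadraticMap {W V : Type*} [AddCommGroup W] [Module (ZMod 2) W]
    [AddCommGroup V] [Module (ZMod 2) V] (Q : W → V) : Prop :=
  (∀ x y z : W, qpolar Q (x + y) z = qpolar Q x z + qpolar Q y z) ∧
  (∀ x y z : W, qpolar Q x (y + z) = qpolar Q x y + qpolar Q x z)

/-- The Bockstein operator: the unique `F₂`-derivation of `F₂[x₁,…,x_m]`
with `β(x_i) = x_i²`, given by `β(f) = Σ_i x_i² ∂f/∂x_i`. -/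
noncomputable def bockstein {m : ℕ} (f : MvPolynomial (Fin m) (ZMod 2)) :
    MvPolynomial (Fin m) (ZMod 2) :=
  ∑ i : Fin m, X i ^ 2 * pderiv i f

/-- The quadratic polynomials associated to a quadratic map `Q : F₂^m → F₂^n`:
`q_k = Σ_i Q_k(e_i) x_i² + Σ_{i<j} B_k(e_i,e_j) x_i x_j`. -/
noncomputable def assocPoly {m n : ℕ} (Q : (Fin m → ZMod 2) → (Fin n → ZMod 2)) (k : Fin n) :
    MvPolynomial (Fin m) (ZMod 2) :=
  (∑ i : Fin m, C (Q (Pi.single i 1) k) * X i ^ 2) +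
  ∑ i : Fin m, ∑ j : Fin m,
    if i < j then C (qpolar Q (Pi.single i 1) (Pi.single j 1) k) * X i * X j else 0

/-- `f₁,…,f_r` is a regular sequence: each `f_k` is a nonzerodivisor in the quotient
ring modulo the ideal generated by its predecessors. -/
def IsRegularSeq {R : Type*} [CommRing R] {r : ℕ} (f : Fin r → R) : Prop :=
  ∀ k : Fin r, ∀ g : R,
    f k * g ∈ Ideal.span (f '' {j | j < k}) → g ∈ Ideal.span (f '' {j | j < k})

/-- quadratic Steenrod identity -/
def SteenrodId {m : ℕ} (p : MvPolynomial (Fin m) (ZMod 2)) : Prop :=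
  aeval (fun i => (X i + X i ^ 2 : MvPolynomial (Fin m) (ZMod 2))) p = p + bockstein p + p ^ 2

theorem bockstein_add {m : ℕ} (p q : MvPolynomial (Fin m) (ZMod 2)) :
    bockstein (p + q) = bockstein p + bockstein q := by
  simp [bockstein, mul_add, Finset.sum_add_distrib]

theorem bockstein_mul {m : ℕ} (p q : MvPolynomial (Fin m) (ZMod 2)) :
    bockstein (p * q) = p * bockstein q + q * bockstein p := by
  simp only [bockstein, Finset.mul_sum, ← Finset.sum_add_distrib]
  refine Finset.sum_congr rfl fun i _ => ?_
  simp only [Derivation.leibniz, smul_eq_mul]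
  ring

theorem bockstein_C {m : ℕ} (c : ZMod 2) : bockstein (C c : MvPolynomial (Fin m) (ZMod 2)) = 0 := by
  simp [bockstein]

theorem bockstein_X {m : ℕ} (i : Fin m) : bockstein (X i : MvPolynomial (Fin m) (ZMod 2)) = X i ^ 2 := by
  simp [bockstein, pderiv_X, Pi.single_apply]

theorem steenrod_add {m : ℕ} {p q : MvPolynomial (Fin m) (ZMod 2)} (hp : SteenrodId p)
    (hq : SteenrodId q) : SteenrodId (p + q) := by
  unfold SteenrodId at *
  rw [map_add, hp, hq, bockstein_add, CharTwo.add_sq]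
  ring

theorem steenrod_zero {m : ℕ} : SteenrodId (0 : MvPolynomial (Fin m) (ZMod 2)) := by
  simp [SteenrodId, bockstein]

theorem steenrod_sum {m : ℕ} {ι : Type*} (s : Finset ι) (f : ι → MvPolynomial (Fin m) (ZMod 2))
    (h : ∀ i ∈ s, SteenrodId (f i)) : SteenrodId (∑ i ∈ s, f i) :=
  Finset.sum_induction f SteenrodId (fun _ _ => steenrod_add) steenrod_zero h

theorem steenrod_mon {m : ℕ} (c : ZMod 2) (i j : Fin m) :
    SteenrodId (C c * X i * X j : MvPolynomial (Fin m) (ZMod 2)) := by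
  have hc : (C c : MvPolynomial (Fin m) (ZMod 2)) ^ 2 = C c := by
    rw [← C_pow]; congr 1; revert c; decide
  simp only [SteenrodId, bockstein_mul, bockstein_C, bockstein_X, map_mul, aeval_X, aeval_C, algebraMap_eq]
  linear_combination (- (X i) ^2 * (X j)^2 : MvPolynomial (Fin m) (ZMod 2)) * hc

theorem steenrod_assoc {m n : ℕ} (Q : (Fin m → ZMod 2) → (Fin n → ZMod 2)) (k : Fin n) :
    SteenrodId (assocPoly Q k) := by
  unfold assocPoly
  refine steenrod_add (steenrod_sum _ _ fun i _ => ?_)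
    (steenrod_sum _ _ fun i _ => steenrod_sum _ _ fun j _ => ?_)
  · rw [pow_two, ← mul_assoc]; exact steenrod_mon _ _ _
  · split_ifs
    · exact steenrod_mon _ _ _
    · exact steenrod_zero

theorem assoc_homog {m n : ℕ} (Q : (Fin m → ZMod 2) → (Fin n → ZMod 2)) (k : Fin n) :
    (assocPoly Q k).IsHomogeneous 2 := by
  unfold assocPoly
  refine IsHomogeneous.add (IsHomogeneous.sum _ _ _ fun i _ => ?_)
    (IsHomogeneous.sum _ _ _ fun i _ => IsHomogeneous.sum _ _ _ fun j _ => ?_)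
  · simpa using (isHomogeneous_C (Fin m) _).mul ((isHomogeneous_X (ZMod 2) i).pow 2)
  · split_ifs
    · simpa using ((isHomogeneous_C (Fin m) _).mul (isHomogeneous_X (ZMod 2) i)).mul (isHomogeneous_X (ZMod 2) j)
    · exact isHomogeneous_zero _ _ _

theorem assoc_scale {m n : ℕ} (Q : (Fin m → ZMod 2) → (Fin n → ZMod 2)) (k : Fin n)
    {K : Type*} [Field K] [Algebra (ZMod 2) K] (c : K) (w : Fin m → K) :
    aeval (fun j => c * w j) (assocPoly Q k) = c ^ 2 * aeval w (assocPoly Q k) := by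
  simp only [assocPoly, map_add, map_sum, map_mul, aeval_C, aeval_X, map_pow, mul_add,
    Finset.mul_sum]
  congr 1
  · exact Finset.sum_congr rfl fun i _ => by ring
  · refine Finset.sum_congr rfl fun i _ => Finset.sum_congr rfl fun j _ => ?_
    split_ifs
    · simp only [map_mul, aeval_C, aeval_X]; ring
    · simp

theorem eval_assoc {m n : ℕ} (Q : (Fin m → ZMod 2) → (Fin n → ZMod 2)) (hQ : IsQuadraticMap Q)
    (v : Fin m → ZMod 2) (k : Fin n) : eval v (assocPoly Q k) = Q v k := by
  have h0 : Q 0 = 0 := by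
    have h := hQ.1 0 0 0
    simp only [qpolar, add_zero] at h
    have h2 : ∀ a : Fin n → ZMod 2, a + a = 0 := fun a => funext fun j => CharTwo.add_self_eq_zero (a j)
    simpa [h2] using h
  have hB0 : ∀ y, qpolar Q 0 y = 0 := fun y => by
    have h := hQ.1 0 0 y
    simpa using h
  have hBy : ∀ y, qpolar Q y 0 = 0 := fun y => by
    have h := hQ.2 y 0 0
    simpa using h
  have hadd : ∀ x y, Q (x + y) = Q x + Q y + qpolar Q x y := by
    intro x y
    unfold qpolar
    have h2 : ∀ a : Fin n → ZMod 2, a + a = 0 := fun a => funext fun j => CharTwo.add_self_eq_zero (a j)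
    linear_combination (-1 : ℤ) • h2 (Q x) + (-1 : ℤ) • h2 (Q y)
  have hz : ∀ c : ZMod 2, c = 0 ∨ c = 1 := by decide
  have hQs : ∀ (i : Fin m) (c : ZMod 2), Q (Pi.single i c) = c • Q (Pi.single i 1) := by
    intro i c
    rcases hz c with rfl | rfl <;> simp [h0]
  have hBs : ∀ (i j : Fin m) (c d : ZMod 2), qpolar Q (Pi.single i c) (Pi.single j d) =
      (c * d) • qpolar Q (Pi.single i 1) (Pi.single j 1) := by
    intro i j c d
    rcases hz c with rfl | rfl <;> rcases hz d with rfl | rfl <;> simp [hB0, hBy]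
  have hBsum : ∀ (s : Finset (Fin m)) (f : Fin m → (Fin m → ZMod 2)) y,
      qpolar Q (∑ i ∈ s, f i) y = ∑ i ∈ s, qpolar Q (f i) y := by
    intro s f y
    induction s using Finset.induction_on with
    | empty => simp [hB0]
    | insert a s ha ih => rw [Finset.sum_insert ha, Finset.sum_insert ha, hQ.1, ih]
  have main : ∀ s : Finset (Fin m), Q (∑ i ∈ s, Pi.single i (v i)) =
      (∑ i ∈ s, v i • Q (Pi.single i 1)) + ∑ i ∈ s, ∑ j ∈ s,
        if i < j then (v i * v j) • qpolar Q (Pi.single i 1) (Pi.single j 1) else 0 := by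
    intro s
    induction s using Finset.induction_on_max with
    | empty => simp [h0]
    | insert a s hlt ih =>
      have ha : a ∉ s := fun h => lt_irrefl _ (hlt a h)
      rw [Finset.sum_insert ha, Finset.sum_insert ha, Finset.sum_insert ha, add_comm (Pi.single a (v a) : Fin m → ZMod 2),
        hadd, ih, hQs, hBsum, Finset.sum_congr rfl (fun i _ => hBs i a (v i) (v a))]
      simp only [Finset.sum_insert ha, Finset.sum_add_distrib, lt_irrefl, if_false]
      rw [Finset.sum_congr rfl (fun i hi => if_pos (hlt i hi))]
      rw [Finset.sum_eq_zero (s := s) (f := fun j => if a < j then _ else _) (fun i hi => if_neg (hlt i hi).not_gt)]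
      abel
  have h := main Finset.univ
  rw [Finset.univ_sum_single] at h
  rw [h]
  have hsq : ∀ c : ZMod 2, c ^ 2 = c := by decide
  simp only [assocPoly, map_add, map_sum, map_mul, eval_C, eval_X, map_pow, hsq, Pi.add_apply, Finset.sum_apply, Pi.smul_apply, smul_eq_mul]
  congr 1
  · exact Finset.sum_congr rfl fun i _ => mul_comm _ _
  · refine Finset.sum_congr rfl fun i _ => Finset.sum_congr rfl fun j _ => ?_
    split_ifs
    · simp; ring
    · simp

theorem no_zero {m n : ℕ} (Q : (Fin m → ZMod 2) → (Fin n → ZMod 2)) (hQ : IsQuadraticMap Q)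
    (heff : ∀ w, Q w = 0 → w = 0)
    (hBC : ∀ k : Fin n, bockstein (assocPoly Q k) ∈ Ideal.span (Set.range (assocPoly Q)))
    {K : Type*} [Field K] [Algebra (ZMod 2) K] [CharP K 2] [DecidableEq K] (d : ℕ) : ∀ (w : Fin m → K)
    (_ : (Finset.univ.filter fun i => w i ≠ 0).card ≤ d)
    (_ : ∀ k, aeval w (assocPoly Q k) = 0), w = 0 := by
  induction d with
  | zero =>
    intro w hw _
    ext i
    by_contra h
    have : i ∈ Finset.univ.filter fun i => w i ≠ 0 := by simpa using h
    rw [Finset.card_eq_zero.mp (Nat.le_zero.mp hw)] at this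
    simp at this
  | succ d ih =>
    intro w hcard hw
    by_contra hne
    obtain ⟨i, hi⟩ := Function.ne_iff.mp hne
    simp only [Pi.zero_apply] at hi
    let u : Fin m → K := fun j => (w i)⁻¹ * w j
    have hu : ∀ k, aeval u (assocPoly Q k) = 0 := by
      intro k
      rw [assoc_scale, hw, mul_zero]
    have hui : u i = 1 := by simp [u, hi]
    have hu' : ∀ k, aeval (fun j => u j + u j ^ 2) (assocPoly Q k) = 0 := by
      intro k
      have h1 := congrArg (aeval u) (steenrod_assoc Q k)
      have hI : ∀ p ∈ Ideal.span (Set.range (assocPoly Q)), aeval u p = 0 := by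
        intro p hp
        have : Ideal.span (Set.range (assocPoly Q)) ≤ RingHom.ker (aeval u : _ →ₐ[ZMod 2] K) := by
          rw [Ideal.span_le]; rintro _ ⟨k, rfl⟩; exact hu k
        exact this hp
      rw [map_add, map_add, map_pow, hu k, hI _ (hBC k)] at h1
      rw [← AlgHom.comp_apply, comp_aeval] at h1
      simpa using h1
    have hz := ih _ ?_ hu'
    · have h01 : ∀ j, ∃ c : ZMod 2, algebraMap (ZMod 2) K c = u j := by
        intro j
        have := congrFun hz j
        simp only [Pi.zero_apply] at this
        have h2 : u j * (1 + u j) = 0 := by linear_combination this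
        rcases mul_eq_zero.mp h2 with h | h
        · exact ⟨0, by simp [h]⟩
        · exact ⟨1, by rw [map_one]; exact (CharTwo.add_eq_zero.mp h)⟩
      choose v hv using h01
      have hQv : Q v = 0 := by
        ext k
        rw [← eval_assoc Q hQ]
        have := hu k
        have hv' : u = fun j => algebraMap (ZMod 2) K (v j) := by ext j; rw [hv]
        rw [hv'] at this
        apply (algebraMap (ZMod 2) K).injective
        rw [Pi.zero_apply, map_zero, ← this, ← aeval_eq_eval]
        exact (aeval_algebraMap_apply _ _ _).symm
      have := heff v hQv
      have h3 := hv i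
      rw [this, hui] at h3
      simp at h3
    · apply Nat.le_of_lt_succ
      refine lt_of_lt_of_le (Finset.card_lt_card ?_) hcard
      refine Finset.ssubset_iff_of_subset ?_ |>.mpr ⟨i, by simpa using hi, ?_⟩
      · intro j
        simp only [Finset.mem_filter, Finset.mem_univ, true_and]
        intro h h'
        apply h
        simp [u, h']
      · simp [hui, CharTwo.add_self_eq_zero]

theorem X_mem_of_prime {m n : ℕ} (Q : (Fin m → ZMod 2) → (Fin n → ZMod 2)) (hQ : IsQuadraticMap Q)
    (heff : ∀ w, Q w = 0 → w = 0)
    (hBC : ∀ k : Fin n, bockstein (assocPoly Q k) ∈ Ideal.span (Set.range (assocPoly Q)))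
    (P : Ideal (MvPolynomial (Fin m) (ZMod 2))) [P.IsPrime] (hP : ∀ k, assocPoly Q k ∈ P)
    (i : Fin m) : X i ∈ P := by
  classical
  let A := MvPolynomial (Fin m) (ZMod 2) ⧸ P
  let K := FractionRing A
  let φ : MvPolynomial (Fin m) (ZMod 2) →ₐ[ZMod 2] K :=
    (Algebra.algHom (ZMod 2) A K).comp (Ideal.Quotient.mkₐ (ZMod 2) P)
  have : CharP K 2 := charP_of_injective_algebraMap (algebraMap (ZMod 2) K).injective 2
  have hker : ∀ p, φ p = 0 ↔ p ∈ P := by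
    intro p
    rw [← Ideal.Quotient.eq_zero_iff_mem]
    exact map_eq_zero_iff _ (IsFractionRing.injective A K)
  have h := no_zero Q hQ heff hBC (K := K) _ (fun j => φ (X j)) le_rfl (by
    intro k
    have : aeval (fun j => φ (X j)) = φ := (aeval_unique φ).symm
    rw [this, hker]; exact hP k)
  exact (hker _).mp (congrFun h i)

open RingTheory.Sequence IsLocalRing CategoryTheory Abelian Pointwise

theorem exchange_regular {R : Type} [CommRing R] [IsNoetherianRing R] [IsLocalRing R]
    {N : Type} [AddCommGroup N] [Module R N] [Module.Finite R N] [Nontrivial N]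
    (rs : List R) (hrs : ∀ r ∈ rs, r ∈ maximalIdeal R) (reg : IsRegular N rs)
    {n : ℕ} (hn : rs.length = n + 1)
    {y : R} (hy : y ∈ maximalIdeal R) (hreg : IsSMulRegular N y) :
    ∃ ss : List R, ss.length = n ∧ (∀ r ∈ ss, r ∈ maximalIdeal R) ∧
      IsRegular (QuotSMulTop y N) ss := by
  have lt : ∀ (N : Type) [AddCommGroup N] [Module R N] [Module.Finite R N] [Nontrivial N],
      maximalIdeal R • (⊤ : Submodule R N) < ⊤ := by
    intro N _ _ _ _
    refine lt_top_iff_ne_top.mpr ?_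
    intro h
    exact Submodule.top_ne_ideal_smul_of_le_jacobson_annihilator
      (maximalIdeal_le_jacobson _) h.symm
  have nt : Nontrivial (QuotSMulTop y N) := by
    refine Submodule.Quotient.nontrivial_iff.mpr ?_
    exact (Submodule.top_ne_pointwise_smul_of_mem_jacobson_annihilator 
      (maximalIdeal_le_jacobson _ hy)).symm
  let k := ModuleCat.of R (R ⧸ maximalIdeal R)
  have hsupp : Module.support R k = PrimeSpectrum.zeroLocus (maximalIdeal R) := by
    rw [Module.support_eq_zeroLocus]
    simp [k, Ideal.annihilator_quotient]
  have h0 := ModuleCat.subsingleton_ext_of_exists_isRegular (maximalIdeal R) k hsupp.le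
    (ModuleCat.of R N) (lt N) rs hrs reg
  apply ModuleCat.exists_isRegular_of_exists_subsingleton_ext (maximalIdeal R) n
    (ModuleCat.of R (QuotSMulTop y N)) (lt _) k hsupp
  intro i hi
  have hS := IsSMulRegular.smulShortComplex_shortExact (M := ModuleCat.of R N) hreg
  refine ⟨fun a b => ?_⟩
  have key : ∀ a : Ext k (ModuleCat.smulShortComplex (ModuleCat.of R N) y).X₃ i, a = 0 := by
    intro a
    have := h0 (i+1) (by omega)
    obtain ⟨x, rfl⟩ := Ext.covariant_sequence_exact₃ k hS a (rfl : i + 1 = i + 1)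
      (@Subsingleton.elim _ this _ _)
    have := h0 i (by omega)
    rw [show x = 0 from @Subsingleton.elim _ this x 0]
    exact Ext.zero_comp (C := ModuleCat R) _ _ _ _ _
  exact (key a).trans (key b).symm

theorem ass_coheight {R : Type} [CommRing R] [IsNoetherianRing R] [IsLocalRing R]
    (rs : List R) : ∀ {N : Type} [AddCommGroup N] [Module R N] [Module.Finite R N]
    (_ : ∀ r ∈ rs, r ∈ maximalIdeal R) (_ : IsWeaklyRegular N rs)
    (P : PrimeSpectrum R) (_ : IsAssociatedPrime P.asIdeal N),
    (rs.length : ℕ∞) ≤ Order.coheight P := by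
  induction rs with
  | nil => intros; simp
  | cons a rs ih =>
    intro N _ _ _ hrs reg P hP
    rw [isWeaklyRegular_cons_iff] at reg
    obtain ⟨hP1, x, hx⟩ := isAssociatedPrime_iff.mp hP
    have haP : a ∉ P.asIdeal := by
      intro ha
      have hax : a • x = 0 := by
        rw [hx] at ha
        simpa [Submodule.mem_colon_singleton] using ha
      have : x = 0 := reg.1 (by simpa using hax)
      apply hP1.ne_top
      rw [hx, this]
      ext; simp [Submodule.mem_colon_singleton]
    let T : Submodule R N := 
      { carrier := {n | ∀ p ∈ P.asIdeal, p • n = 0}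
        add_mem' := fun {u v} hu hv p hp => by rw [smul_add, hu p hp, hv p hp, add_zero]
        zero_mem' := fun p _ => smul_zero p
        smul_mem' := fun c u hu p hp => by rw [smul_comm, hu p hp, smul_zero] }
    have hxT : x ∈ T := by
      intro p hp
      rw [hx] at hp
      simpa [Submodule.mem_colon_singleton] using hp
    have hx0 : x ≠ 0 := by
      rintro rfl
      apply hP1.ne_top
      rw [hx]
      ext; simp [Submodule.mem_colon_singleton]
    have hT : ¬ T ≤ a • (⊤ : Submodule R N) := by
      intro hT
      have h2 : T ≤ Ideal.span {a} • T := by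
        intro n hn
        obtain ⟨n', -, rfl⟩ := (Submodule.mem_smul_pointwise_iff_exists _ _ _).mp (hT hn)
        refine Submodule.smul_mem_smul (Ideal.mem_span_singleton_self a) ?_
        intro p hp
        have := hn p hp
        rw [smul_comm] at this
        exact reg.1 (by simpa using this)
      have := Submodule.eq_bot_of_le_smul_of_le_jacobson_bot (Ideal.span {a}) T
        (IsNoetherian.noetherian T) h2 (by
          rw [IsLocalRing.jacobson_eq_maximalIdeal _ bot_ne_top, Ideal.span_singleton_le_iff_mem]
          exact hrs a (by simp))
      rw [this] at hxT
      exact hx0 (by simpa using hxT)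
    obtain ⟨t, htT, hta⟩ := Set.not_subset.mp hT
    let t' : QuotSMulTop a N := Submodule.Quotient.mk t
    have ht' : t' ≠ 0 := by
      intro h
      exact hta ((Submodule.Quotient.mk_eq_zero _).mp h)
    obtain ⟨P', hP', hle⟩ := exists_le_isAssociatedPrime_of_isNoetherianRing (R := R) t' ht'
    have hPP : P < ⟨P', hP'.1⟩ := by
      have h1 : P.asIdeal ≤ P' := by
        refine le_trans ?_ hle
        intro p hp
        simp only [Submodule.mem_colon_singleton, Submodule.mem_bot]
        rw [← Submodule.Quotient.mk_smul, htT p hp, Submodule.Quotient.mk_zero]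
      have h2 : a ∈ P' := by
        apply hle
        simp only [Submodule.mem_colon_singleton, Submodule.mem_bot]
        rw [← Submodule.Quotient.mk_smul, Submodule.Quotient.mk_eq_zero]
        exact Submodule.smul_mem_pointwise_smul _ _ _ trivial
      refine lt_of_le_of_ne h1 ?_
      rintro rfl
      exact haP h2
    have := ih (N := QuotSMulTop a N) (fun r hr => hrs r (by simp [hr])) reg.2 ⟨P', hP'.1⟩ hP'
    calc ((a :: rs).length : ℕ∞) = rs.length + 1 := by simp
      _ ≤ Order.coheight (⟨P', hP'.1⟩ : PrimeSpectrum R) + 1 := by gcongr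
      _ ≤ _ := Order.coheight_add_one_le hPP

theorem dim_le_length {R : Type} [CommRing R] [IsNoetherianRing R] [IsLocalRing R]
    (bs : List R) (hbs : ∀ r ∈ bs, r ∈ maximalIdeal R)
    (h : ∀ P : Ideal R, P.IsPrime → (∀ r ∈ bs, r ∈ P) → P = maximalIdeal R) :
    ringKrullDim R ≤ bs.length := by
  classical
  rw [← IsLocalRing.maximalIdeal_height_eq_ringKrullDim]
  have hmin : maximalIdeal R ∈ (Ideal.span (bs.toFinset : Set R)).minimalPrimes := by
    refine ⟨⟨inferInstance, ?_⟩, ?_⟩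
    · rw [Ideal.span_le]; intro r hr; exact hbs r (by simpa using hr)
    · rintro P ⟨hP, hle⟩ -
      rw [h P hP (fun r hr => hle (Ideal.subset_span (by simpa using hr)))]
  have h1 := Ideal.height_le_card_of_mem_minimalPrimes_span_finset hmin
  have h2 : ((bs.toFinset.card : ℕ∞)) ≤ bs.length := by
    exact_mod_cast bs.toFinset_card_le
  exact_mod_cast h1.trans h2

theorem coheight_le_length {R : Type} [CommRing R] [IsNoetherianRing R] [IsLocalRing R]
    (P : PrimeSpectrum R)
    (bs : List R) (hbs : ∀ r ∈ bs, r ∈ maximalIdeal R)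
    (h : ∀ P' : Ideal R, P'.IsPrime → P.asIdeal ≤ P' → (∀ r ∈ bs, r ∈ P') → P' = maximalIdeal R) :
    Order.coheight P ≤ bs.length := by
  have hP := P.2
  have hs : Function.Surjective (Ideal.Quotient.mk P.asIdeal) := Ideal.Quotient.mk_surjective
  have : IsLocalRing (R ⧸ P.asIdeal) := IsLocalRing.of_surjective' _ hs
  have h1 := dim_le_length (R := R ⧸ P.asIdeal) (bs.map (Ideal.Quotient.mk P.asIdeal)) (by
    intro r hr
    obtain ⟨s, hs, rfl⟩ := List.mem_map.mp hr
    rw [IsLocalRing.mem_maximalIdeal, mem_nonunits_iff]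
    intro hu
    have h5 : maximalIdeal R ⊔ P.asIdeal = maximalIdeal R :=
      sup_eq_left.mpr (IsLocalRing.le_maximalIdeal hP.ne_top)
    obtain ⟨t, ht⟩ := hu.exists_right_inv
    obtain ⟨t, rfl⟩ := Ideal.Quotient.mk_surjective t
    rw [← map_mul, ← map_one (Ideal.Quotient.mk P.asIdeal), Ideal.Quotient.eq] at ht
    have h6 : s * t - 1 ∈ maximalIdeal R := IsLocalRing.le_maximalIdeal hP.ne_top ht
    have h7 : s * t ∈ maximalIdeal R := Ideal.mul_mem_right _ _ (hbs s hs)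
    exact (Ideal.ne_top_iff_one _).mp (maximalIdeal.isMaximal R).ne_top
      (by simpa using Ideal.sub_mem _ h7 h6)) (by
    intro P' hP' hb
    have h3 := h (P'.comap (Ideal.Quotient.mk P.asIdeal)) inferInstance (by
      intro p hp
      rw [Ideal.mem_comap, Ideal.Quotient.eq_zero_iff_mem.mpr hp]; exact P'.zero_mem) (by
      intro r hr
      exact hb _ (List.mem_map_of_mem hr))
    have h4 : P'.IsMaximal := by
      have : (P'.comap (Ideal.Quotient.mk P.asIdeal)).IsMaximal := by rw [h3]; infer_instance
      rw [← Ideal.map_comap_of_surjective _ hs P']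
      refine (Ideal.map_eq_top_or_isMaximal_of_surjective _ hs this).resolve_left ?_
      rw [Ideal.map_comap_of_surjective _ hs P']
      exact hP'.ne_top
    exact IsLocalRing.eq_maximalIdeal h4)
  rw [ringKrullDim_quotient] at h1
  have h2 : (PrimeSpectrum.zeroLocus (P.asIdeal : Set R)) = Set.Ici P := by
    ext; rfl
  rw [h2, ← Order.coheight_eq_krullDim_Ici] at h1
  rw [List.length_map] at h1
  exact_mod_cast h1

theorem isRegular_of_primary {R : Type} [CommRing R] [IsNoetherianRing R] [IsLocalRing R]
    (bs : List R) : ∀ {N : Type} [AddCommGroup N] [Module R N] [Module.Finite R N] [Nontrivial N]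
    (rs : List R) (_ : ∀ r ∈ rs, r ∈ maximalIdeal R) (_ : IsRegular N rs)
    (_ : rs.length = bs.length) (_ : ∀ r ∈ bs, r ∈ maximalIdeal R)
    (_ : ∀ P : Ideal R, P.IsPrime → Module.annihilator R N ≤ P → (∀ r ∈ bs, r ∈ P) →
      P = maximalIdeal R),
    IsWeaklyRegular N bs := by
  induction bs with
  | nil => intros; simp
  | cons b bs ih =>
    intro N _ _ _ _ rs hrs reg hlen hbs hprim
    have hbm : b ∈ maximalIdeal R := hbs b (by simp)
    have hb : IsSMulRegular N b := by
      by_contra hb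
      have : b ∈ ⋃ p ∈ associatedPrimes R N, (p : Set R) := by
        rw [biUnion_associatedPrimes_eq_zero_divisors]
        by_contra hc
        apply hb
        rw [isSMulRegular_iff_right_eq_zero_of_smul]
        intro x hx
        by_contra hx0
        exact hc ⟨x, hx0, hx⟩
      simp only [Set.mem_iUnion] at this
      obtain ⟨P, hP, hbP⟩ := this
      have hP' : IsAssociatedPrime P N := hP
      have h1 := ass_coheight rs hrs reg.1 ⟨P, hP'.1⟩ hP'
      have h2 := coheight_le_length ⟨P, hP'.1⟩ bs (fun r hr => hbs r (by simp [hr])) (by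
        intro P' hp' hle hr
        refine hprim P' hp' ((Submodule.annihilator_top (R := R) (M := N) ▸ hP'.annihilator_le).trans hle) ?_
        intro r hr'
        rcases List.mem_cons.mp hr' with rfl | h
        · exact hle hbP
        · exact hr r h)
      have h3 := h1.trans h2
      rw [hlen] at h3
      have : (b :: bs).length ≤ bs.length := by exact_mod_cast h3
      simp at this
    obtain ⟨ss, hsl, hss, hsreg⟩ := exchange_regular rs hrs reg (n := bs.length) (by simpa using hlen) hbm hb
    have nt : Nontrivial (QuotSMulTop b N) := by
      refine Submodule.Quotient.nontrivial_iff.mpr ?_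
      exact (Submodule.top_ne_pointwise_smul_of_mem_jacobson_annihilator 
        (maximalIdeal_le_jacobson _ hbm)).symm
    rw [isWeaklyRegular_cons_iff]
    refine ⟨hb, ih ss hss hsreg hsl (fun r hr => hbs r (by simp [hr])) ?_⟩
    intro P hP hann hr
    have hbP : b ∈ P := by
      apply hann
      rw [Module.mem_annihilator]
      intro n
      obtain ⟨n, rfl⟩ := Submodule.Quotient.mk_surjective _ n
      rw [← Submodule.Quotient.mk_smul, Submodule.Quotient.mk_eq_zero]
      exact Submodule.smul_mem_pointwise_smul _ _ _ trivial
    refine hprim P hP (le_trans ?_ hann) ?_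
    · intro r hr
      rw [Module.mem_annihilator] at hr ⊢
      intro n
      obtain ⟨n, rfl⟩ := Submodule.Quotient.mk_surjective _ n
      rw [← Submodule.Quotient.mk_smul, hr n, Submodule.Quotient.mk_zero]
    · intro r hr'
      rcases List.mem_cons.mp hr' with rfl | h
      · exact hbP
      · exact hr r h

theorem isWeaklyRegular_ofFn_iff {S : Type*} [CommRing S] {r : ℕ} (f : Fin r → S) :
    IsWeaklyRegular S (List.ofFn f) ↔ IsRegularSeq f := by
  have hI : ∀ k : Fin r, Ideal.ofList ((List.ofFn f).take k) = Ideal.span (f '' {j | j < k}) := by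
    intro k
    unfold Ideal.ofList
    congr 1
    ext x
    simp only [Set.mem_setOf_eq, Set.mem_image, List.mem_take_iff_getElem]
    constructor
    · rintro ⟨i, hi, rfl⟩
      simp only [List.length_ofFn, lt_min_iff] at hi
      exact ⟨⟨i, hi.2⟩, hi.1, by simp⟩
    · rintro ⟨j, hj, rfl⟩
      exact ⟨j, by simpa using hj, by simp⟩
  have key : ∀ k : Fin r, IsSMulRegular (S ⧸ (Ideal.ofList ((List.ofFn f).take k) • ⊤ : Ideal S)) (f k) ↔
      ∀ g : S, f k * g ∈ Ideal.span (f '' {j | j < k}) → g ∈ Ideal.span (f '' {j | j < k}) := by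
    intro k
    rw [hI, isSMulRegular_iff_right_eq_zero_of_smul]
    constructor
    · intro h g hg
      have := h (Submodule.Quotient.mk g) (by
        rw [← Submodule.Quotient.mk_smul, Submodule.Quotient.mk_eq_zero]
        simpa using hg)
      rw [Submodule.Quotient.mk_eq_zero] at this
      simpa using this
    · intro h g hg
      obtain ⟨g, rfl⟩ := Submodule.Quotient.mk_surjective _ g
      rw [← Submodule.Quotient.mk_smul, Submodule.Quotient.mk_eq_zero] at hg
      rw [Submodule.Quotient.mk_eq_zero]
      simpa using h g (by simpa using hg)
  rw [isWeaklyRegular_iff_Fin]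
  constructor
  · intro h k
    rw [← key]
    have := h (k.cast (by simp))
    simpa using this
  · intro h i
    have := (key (i.cast (by simp))).mpr (h _)
    have e : (List.ofFn f)[i] = f (i.cast (by simp)) := by
      simp only [Fin.getElem_fin, List.getElem_ofFn]; rfl
    rw [e]
    exact this

theorem X_isRegularSeq (m : ℕ) :
    IsRegularSeq (fun i : Fin m => (X i : MvPolynomial (Fin m) (ZMod 2))) := by
  intro k g hg
  rw [show (fun i : Fin m => (X i : MvPolynomial (Fin m) (ZMod 2))) '' {j | j < k} = X '' {j | j < k} from rfl] at *
  rw [mem_ideal_span_X_image] at *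
  intro d hd
  obtain ⟨i, hi, hne⟩ := hg (Finsupp.single k 1 + d) (by
    rw [mem_support_iff] at hd ⊢
    rwa [coeff_X_mul])
  refine ⟨i, hi, ?_⟩
  have : k ≠ i := ne_of_gt hi
  simpa [Finsupp.single_apply, this] using hne

attribute [local instance] MvPolynomial.gradedAlgebra

theorem homog_descend {m : ℕ} (J : Ideal (MvPolynomial (Fin m) (ZMod 2)))
    (hJ : J.IsHomogeneous (homogeneousSubmodule (Fin m) (ZMod 2)))
    (f : MvPolynomial (Fin m) (ZMod 2)) (d : ℕ) (hf : f.IsHomogeneous d)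
    (h : ∀ g, f * g ∈ J → ∃ s, constantCoeff s ≠ 0 ∧ s * g ∈ J)
    (g : MvPolynomial (Fin m) (ZMod 2)) (hg : f * g ∈ J) : g ∈ J := by
  let 𝒜 := homogeneousSubmodule (Fin m) (ZMod 2)
  rw [← DirectSum.sum_support_decompose 𝒜 g]
  refine Ideal.sum_mem _ fun i _ => ?_
  have h1 : f * (DirectSum.decompose 𝒜 g i : MvPolynomial (Fin m) (ZMod 2)) ∈ J := by
    have := hJ (d + i) hg
    rwa [DirectSum.coe_decompose_mul_add_of_left_mem 𝒜 (a := f) hf] at this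
  obtain ⟨s, hs, hsg⟩ := h _ h1
  have h2 := hJ (0 + i) hsg
  rw [DirectSum.coe_decompose_mul_add_of_right_mem 𝒜 (SetLike.coe_mem _)] at h2
  have h3 : (DirectSum.decompose 𝒜 s 0 : MvPolynomial (Fin m) (ZMod 2)) = C (constantCoeff s) := by
    refine (decomposition.decompose'_apply s 0).trans ?_
    rw [homogeneousComponent_zero]; rfl
  have h4 : constantCoeff s = 1 := by
    have : ∀ c : ZMod 2, c ≠ 0 → c = 1 := by decide
    exact this _ hs
  rw [h3, h4, C_1, one_mul] at h2
  exact h2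

/-- If `Q : F₂^m → F₂^n` is an effective, Bockstein closed quadratic map
then `m ≤ n`; and if `m = n`, the associated polynomials form a regular sequence in every
order. -/
theorem effective_bockstein_closed_regular {m n : ℕ}
    (Q : (Fin m → ZMod 2) → (Fin n → ZMod 2)) (hQ : IsQuadraticMap Q)
    (heff : ∀ w, Q w = 0 → w = 0)
    (hBC : ∀ k : Fin n, bockstein (assocPoly Q k) ∈ Ideal.span (Set.range (assocPoly Q))) :
    m ≤ n ∧
    (m = n → ∀ σ : Equiv.Perm (Fin n), IsRegularSeq (fun k => assocPoly Q (σ k))) := by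
  classical
  let R := MvPolynomial (Fin m) (ZMod 2)
  let M : Ideal R := RingHom.ker (constantCoeff (R := ZMod 2) (σ := Fin m))
  have hMp : M.IsPrime := RingHom.ker_isPrime _
  have hM : ∀ P : Ideal R, (∀ i, X i ∈ P) → M ≤ P := by
    intro P hP f hf
    have h1 : f ∈ Ideal.span (X '' (Set.univ : Set (Fin m))) := by
      rw [mem_ideal_span_X_image]
      intro d hd
      by_contra hcon
      have hd0 : d = 0 := by
        ext i
        by_contra h
        exact hcon ⟨i, trivial, h⟩
      rw [mem_support_iff, hd0] at hd
      exact hd hf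
    refine Ideal.span_le.mpr ?_ h1
    rintro _ ⟨i, -, rfl⟩
    exact hP i
  have hXM : ∀ i, X i ∈ M := fun i => by simp [M, RingHom.mem_ker]
  have hqM : ∀ k, assocPoly Q k ∈ M := by
    intro k
    rw [RingHom.mem_ker]
    have := (assoc_homog Q k).coeff_eq_zero (d := 0) (by simp)
    exact this
  let A := Localization.AtPrime M
  have hmem : ∀ f ∈ M, algebraMap R A f ∈ maximalIdeal A := fun f hf =>
    (IsLocalization.AtPrime.to_map_mem_maximal_iff A M f).mpr hf
  have hprim : ∀ P : Ideal A, P.IsPrime → (∀ k, algebraMap R A (assocPoly Q k) ∈ P) →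
      P = maximalIdeal A := by
    intro P hP hk
    have h1 := hM (P.comap (algebraMap R A))
      (X_mem_of_prime Q hQ heff hBC (P.comap (algebraMap R A)) hk)
    refine le_antisymm (IsLocalRing.le_maximalIdeal hP.ne_top) ?_
    rw [← Localization.AtPrime.map_eq_maximalIdeal]
    exact Ideal.map_le_iff_le_comap.mpr h1
  have hregX : IsRegular A ((List.ofFn fun i : Fin m => (X i : R)).map (algebraMap R A)) := by
    refine IsWeaklyRegular.isRegular_of_isLocalization_of_mem A M
      ((isWeaklyRegular_ofFn_iff _).mpr (X_isRegularSeq m)) ?_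
    intro r hr
    obtain ⟨i, rfl⟩ := (List.mem_ofFn' _ _).mp hr
    exact hXM i
  have hXmax : ∀ r ∈ (List.ofFn fun i : Fin m => (X i : R)).map (algebraMap R A),
      r ∈ maximalIdeal A := by
    intro r hr
    obtain ⟨s, hs, rfl⟩ := List.mem_map.mp hr
    obtain ⟨i, rfl⟩ := (List.mem_ofFn' _ _).mp hs
    exact hmem _ (hXM i)
  have hdim : (m : WithBot ℕ∞) ≤ ringKrullDim A := by
    rw [← ringKrullDim_add_length_eq_ringKrullDim_of_isRegular _ hregX]
    simp only [List.length_map, List.length_ofFn]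
    refine le_add_of_nonneg_left ?_
    have : Nontrivial (A ⧸ Ideal.ofList ((List.ofFn fun i : Fin m => (X i : R)).map (algebraMap R A))) := by
      refine Ideal.Quotient.nontrivial_iff.mpr ?_
      intro h
      have h2 : Ideal.ofList ((List.ofFn fun i : Fin m => (X i : R)).map (algebraMap R A)) ≤ maximalIdeal A :=
        Ideal.span_le.mpr hXmax
      rw [h] at h2
      exact (maximalIdeal.isMaximal A).ne_top (top_le_iff.mp h2)
    exact ringKrullDim_nonneg_of_nontrivial
  have hdim2 : ∀ σ : Equiv.Perm (Fin n),
      (∀ r ∈ List.ofFn (fun k => algebraMap R A (assocPoly Q (σ k))), r ∈ maximalIdeal A) ∧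
      ∀ P : Ideal A, P.IsPrime →
        (∀ r ∈ List.ofFn (fun k => algebraMap R A (assocPoly Q (σ k))), r ∈ P) →
        P = maximalIdeal A := by
    intro σ
    constructor
    · intro r hr
      obtain ⟨i, rfl⟩ := (List.mem_ofFn' _ _).mp hr
      exact hmem _ (hqM _)
    · intro P hP hr
      refine hprim P hP fun k => ?_
      have := hr (algebraMap R A (assocPoly Q (σ (σ.symm k)))) ((List.mem_ofFn' _ _).mpr ⟨σ.symm k, rfl⟩)
      simpa using this
  refine ⟨?_, ?_⟩
  · have h := hdim.trans (dim_le_length _ (hdim2 1).1 (hdim2 1).2)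
    rw [List.length_ofFn] at h
    exact_mod_cast h
  · intro hmn σ
    have hreg := (isWeaklyRegular_ofFn_iff _).mp (isRegular_of_primary (N := A) _ _ hXmax hregX
      (by simp [hmn]) (hdim2 σ).1 (fun P hP _ => (hdim2 σ).2 P hP))
    intro k
    refine homog_descend _ ?_ _ 2 (assoc_homog Q (σ k)) ?_
    · refine Ideal.homogeneous_span (homogeneousSubmodule (Fin m) (ZMod 2)) _ ?_
      rintro _ ⟨j, -, rfl⟩
      exact ⟨2, assoc_homog Q (σ j)⟩
    · intro g hg
      have hmap : Ideal.span ((fun k => algebraMap R A (assocPoly Q (σ k))) '' {j | j < k}) =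
          (Ideal.span ((fun k => assocPoly Q (σ k)) '' {j | j < k})).map (algebraMap R A) := by
        rw [Ideal.map_span, Set.image_image]
      have h1 := hreg k (algebraMap R A g) (by
        rw [hmap, ← map_mul]
        exact Ideal.mem_map_of_mem _ hg)
      rw [hmap, IsLocalization.algebraMap_mem_map_algebraMap_iff M.primeCompl] at h1
      obtain ⟨s, hs, hsg⟩ := h1
      exact ⟨s, hs, hsg⟩
end

section
/- Let Q : F₂^n → F₂^n be a quadratic map whose associated polynomials q₁,…,q_n ∈ F₂[x₁,…,x_n] are in bijective form q_i = x_i² + Σ_{l<k} c^{(i)}_{lk} x_l x_k and form a regular sequence in every order, and let L = Σ_i L_i x_i be an n×n matrix of homogeneous linear forms with β(q) = Lq. Define linear maps ρ, ξ : F₂^n → M_n(F₂) by ρ(e_i) = L_i and ξ(e_i) = L_i² + L_i on the standard basis. Then ξ(Q(w)) = ρ(w) + ρ(w)² for all w ∈ F₂^n; that is, the square Q_gl ∘ ρ = ξ ∘ Q commutes, where Q_gl(A) = A + A². -/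
open MvPolynomial

lemma glr_Q_zero {n : ℕ} {Q : (Fin n → ZMod 2) → (Fin n → ZMod 2)} (hQ : IsQuadraticMap Q) :
    Q 0 = 0 := by
  have h := hQ.1 0 0 0
  simp only [qpolar, add_zero] at h
  have h2 : ∀ v : Fin n → ZMod 2, v + v = 0 := fun v => by
    ext i; exact CharTwo.add_self_eq_zero _
  simpa [h2] using h

lemma glr_expand {n : ℕ} {Q : (Fin n → ZMod 2) → (Fin n → ZMod 2)} (hQ : IsQuadraticMap Q)
    (w : Fin n → ZMod 2) (s : Finset (Fin n)) (k : Fin n) :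
    Q (∑ i ∈ s, Pi.single i (w i)) k = ∑ i ∈ s, Q (Pi.single i 1) k * w i ^ 2 +
      ∑ i ∈ s, ∑ j ∈ s, if i < j then
        qpolar Q (Pi.single i 1) (Pi.single j 1) k * w i * w j else 0 := by
  have hz := glr_Q_zero hQ
  have h2 : ∀ v : Fin n → ZMod 2, v + v = 0 := fun v => by
    ext i; exact CharTwo.add_self_eq_zero _
  have pz1 : ∀ y, qpolar Q 0 y = 0 := fun y => by simp [qpolar, hz, h2]
  have pz2 : ∀ y, qpolar Q y 0 = 0 := fun y => by simp [qpolar, hz, h2]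
  have z2 : ∀ a : ZMod 2, a = 0 ∨ a = 1 := by decide
  have hs1 : ∀ i, Q (Pi.single i (w i)) k = Q (Pi.single i 1) k * w i ^ 2 := by
    intro i
    rcases z2 (w i) with h | h <;> simp [h, hz]
  have hs2 : ∀ i j, qpolar Q (Pi.single i (w i)) (Pi.single j (w j)) k =
      qpolar Q (Pi.single i 1) (Pi.single j 1) k * w i * w j := by
    intro i j
    rcases z2 (w i) with h | h <;> rcases z2 (w j) with h' | h' <;> simp [h, h', pz1, pz2]
  have hsum : ∀ (s : Finset (Fin n)) y, qpolar Q (∑ i ∈ s, Pi.single i (w i)) y =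
      ∑ i ∈ s, qpolar Q (Pi.single i (w i)) y := by
    intro s y
    induction s using Finset.induction_on with
    | empty => simp [pz1]
    | insert a s ha ih => rw [Finset.sum_insert ha, Finset.sum_insert ha, hQ.1, ih]
  have hadd : ∀ x y, Q (x + y) = Q x + Q y + qpolar Q x y := by
    intro x y
    have e : Q x + Q y + qpolar Q x y = Q (x + y) + (Q x + Q x) + (Q y + Q y) := by
      unfold qpolar; abel
    rw [e, h2, h2]; simp
  induction s using Finset.induction_on_max with
  | empty => simp [hz]
  | insert a s ha ih =>
    have hna : a ∉ s := fun h => lt_irrefl _ (ha a h)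
    rw [Finset.sum_insert hna, Finset.sum_insert hna, Finset.sum_insert hna, add_comm, hadd, hsum]
    simp only [Pi.add_apply, Finset.sum_apply, hs1, hs2, ih, Finset.sum_insert hna]
    rw [Finset.sum_add_distrib]
    have e1 : ∑ x ∈ s, (if x < a then
        qpolar Q (Pi.single x 1) (Pi.single a 1) k * w x * w a else 0) =
        ∑ x ∈ s, qpolar Q (Pi.single x 1) (Pi.single a 1) k * w x * w a :=
      Finset.sum_congr rfl fun x hx => by rw [if_pos (ha x hx)]
    have e2 : ∑ x ∈ s, (if a < x then
        qpolar Q (Pi.single a 1) (Pi.single x 1) k * w a * w x else 0) = 0 :=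
      Finset.sum_eq_zero fun x hx => by rw [if_neg (ha x hx).le.not_gt]
    rw [e1, e2]
    simp only [lt_irrefl, if_false]
    ring

lemma glr_eval {n : ℕ} {Q : (Fin n → ZMod 2) → (Fin n → ZMod 2)} (hQ : IsQuadraticMap Q)
    (w : Fin n → ZMod 2) (k : Fin n) : eval w (assocPoly Q k) = Q w k := by
  have h := glr_expand hQ w Finset.univ k
  rw [Finset.univ_sum_single] at h
  rw [h]
  simp only [assocPoly, map_add, map_sum, map_mul, map_pow, eval_C, eval_X]
  congr 1
  refine Finset.sum_congr rfl fun i _ => Finset.sum_congr rfl fun j _ => ?_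
  split_ifs <;> simp

lemma glr_hom {n : ℕ} (Q : (Fin n → ZMod 2) → (Fin n → ZMod 2)) (k : Fin n) :
    (assocPoly Q k).IsHomogeneous 2 := by
  unfold assocPoly
  refine IsHomogeneous.add (IsHomogeneous.sum _ _ _ fun i _ => ?_)
    (IsHomogeneous.sum _ _ _ fun i _ => IsHomogeneous.sum _ _ _ fun j _ => ?_)
  · simpa using (isHomogeneous_C (Fin n) _).mul ((isHomogeneous_X (ZMod 2) i).pow 2)
  · split_ifs
    · simpa using ((isHomogeneous_C (Fin n) _).mul (isHomogeneous_X (ZMod 2) i)).mul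
        (isHomogeneous_X (ZMod 2) j)
    · exact isHomogeneous_zero _ _ _

/-- The Bockstein as a derivation. -/
noncomputable def glrD (n : ℕ) :
    Derivation (ZMod 2) (MvPolynomial (Fin n) (ZMod 2)) (MvPolynomial (Fin n) (ZMod 2)) :=
  mkDerivation (ZMod 2) fun i => X i ^ 2

lemma glrD_apply {n : ℕ} (f : MvPolynomial (Fin n) (ZMod 2)) : bockstein f = glrD n f := by
  have hs : ∀ g, (∑ i : Fin n, (X i ^ 2 : MvPolynomial (Fin n) (ZMod 2)) • pderiv i) g =
      ∑ i : Fin n, ((X i ^ 2 : MvPolynomial (Fin n) (ZMod 2)) • pderiv (R := ZMod 2) i) g := by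
    intro g
    rw [← Derivation.coeFnAddMonoidHom_apply, map_sum, Finset.sum_apply]
    rfl
  have h : (∑ i : Fin n, (X i ^ 2 : MvPolynomial (Fin n) (ZMod 2)) • pderiv i) = glrD n := by
    apply MvPolynomial.derivation_ext
    intro i
    rw [glrD, mkDerivation_X, hs]
    simp [pderiv_X, Pi.single_apply]
  rw [← h, hs]
  simp [bockstein]

lemma glr_two {n : ℕ} (f : MvPolynomial (Fin n) (ZMod 2)) : f + f = 0 :=
  CharTwo.add_self_eq_zero f

lemma glrD_sq {n : ℕ} (f : MvPolynomial (Fin n) (ZMod 2)) : glrD n (glrD n f) = 0 := by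
  induction f using MvPolynomial.induction_on with
  | C a => simp [glrD]
  | add p q hp hq => simp [hp, hq]
  | mul_X p i hp =>
    have hX : glrD n (X i) = X i * X i := by rw [glrD, mkDerivation_X, sq]
    simp only [Derivation.leibniz, map_add, hX, smul_eq_mul, hp]
    have e := glr_two (p * (X i * (X i * X i)))
    have e' := glr_two (X i * X i * glrD n p)
    linear_combination e + e'

lemma glr_coeff {n : ℕ} {g q : MvPolynomial (Fin n) (ZMod 2)} (hq : q.IsHomogeneous 2)
    (d : Fin n →₀ ℕ) (hd : d.degree = 2) : coeff d (g * q) = coeff 0 g * coeff d q := by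
  classical
  rw [coeff_mul]
  rw [Finset.sum_eq_single (0, d)]
  · rintro ⟨a, b⟩ hab hne
    rw [Finset.HasAntidiagonal.mem_antidiagonal] at hab
    simp only at hab ⊢
    by_cases hb : b.degree = 2
    · exfalso
      have : a.degree + b.degree = d.degree := by rw [← hab, map_add]
      have ha : a.degree = 0 := by omega
      rw [Finsupp.degree_eq_zero_iff] at ha
      subst ha
      simp at hab
      exact hne (by rw [hab])
    · rw [hq.coeff_eq_zero hb, mul_zero]
  · intro h
    exact absurd (by simp) h

lemma glr_span {n : ℕ} {q : Fin n → MvPolynomial (Fin n) (ZMod 2)}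
    (hq : ∀ k, (q k).IsHomogeneous 2)
    (hreg : ∀ σ : Equiv.Perm (Fin n), IsRegularSeq (fun k => q (σ k)))
    (a : Fin n → MvPolynomial (Fin n) (ZMod 2)) (ha : ∀ k, (a k).IsHomogeneous 2)
    (h0 : ∑ k, a k * q k = 0) (j : Fin n) :
    ∃ c : Fin n → ZMod 2, a j = ∑ k, C (c k) * q k := by
  obtain ⟨m, rfl⟩ : ∃ m, n = m + 1 := ⟨n - 1, by have := j.2; omega⟩
  have hr := hreg (Equiv.swap (Fin.last m) j) (Fin.last m) (a j)
  simp only [Equiv.swap_apply_left] at hr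
  have hmem : a j ∈ Ideal.span (Set.range q) := by
    refine Ideal.span_mono ?_ (hr ?_)
    · rintro _ ⟨k, _, rfl⟩
      exact ⟨_, rfl⟩
    · rw [← Finset.add_sum_erase _ _ (Finset.mem_univ j)] at h0
      have e : q j * a j = - ∑ k ∈ Finset.univ.erase j, a k * q k := by
        linear_combination h0
      rw [e]
      refine neg_mem (Ideal.sum_mem _ fun k hk => Ideal.mul_mem_left _ _ (Ideal.subset_span ?_))
      refine ⟨Equiv.swap (Fin.last m) j k, ?_, by simp⟩
      refine lt_of_le_of_ne (Fin.le_last _) fun h => ?_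
      have h' : k = j := by
        have := congrArg (Equiv.swap (Fin.last m) j) h
        simpa using this
      exact (Finset.mem_erase.1 hk).1 h'
  obtain ⟨g, hg⟩ := Ideal.mem_span_range_iff_exists_fun.1 hmem
  refine ⟨fun k => coeff 0 (g k), ?_⟩
  ext d
  by_cases hd : d.degree = 2
  · rw [← hg, coeff_sum, coeff_sum]
    refine Finset.sum_congr rfl fun k _ => ?_
    rw [glr_coeff (hq k) d hd, coeff_C_mul]
  · rw [(ha j).coeff_eq_zero hd, coeff_sum]
    refine (Finset.sum_eq_zero fun k _ => ?_).symm
    rw [coeff_C_mul, (hq k).coeff_eq_zero hd, mul_zero]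

/-- Let `Q : F₂^n → F₂^n` be a quadratic map whose associated polynomials
are in bijective form (`Q(e_i) = e_i`) and form a regular sequence in every order, and let
`L = Σ_i L_i x_i` satisfy `β(q) = Lq`. With `ρ(e_i) = L_i` and `ξ(e_i) = L_i² + L_i`
(extended linearly), the square commutes: `ξ(Q(w)) = Q_gl(ρ(w)) = ρ(w) + ρ(w)²`. -/
theorem gl_representation_square {n : ℕ}
    (Q : (Fin n → ZMod 2) → (Fin n → ZMod 2)) (hQ : IsQuadraticMap Q)
    (hbij : ∀ i : Fin n, Q (Pi.single i 1) = Pi.single i 1)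
    (hreg : ∀ σ : Equiv.Perm (Fin n), IsRegularSeq (fun k => assocPoly Q (σ k)))
    (Ls : Fin n → Matrix (Fin n) (Fin n) (ZMod 2))
    (L : Matrix (Fin n) (Fin n) (MvPolynomial (Fin n) (ZMod 2)))
    (hL : L = ∑ i : Fin n, (X i : MvPolynomial (Fin n) (ZMod 2)) • (Ls i).map C)
    (hLq : L.mulVec (fun k => assocPoly Q k) = fun k => bockstein (assocPoly Q k)) :
    ∀ w : Fin n → ZMod 2,
      (∑ i : Fin n, Q w i • (Ls i * Ls i + Ls i)) =
        (∑ i : Fin n, w i • Ls i) + (∑ i : Fin n, w i • Ls i) * (∑ i : Fin n, w i • Ls i) := by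
  classical
  have hLe : ∀ r j, L r j = ∑ i, X i * C (Ls i r j) := by
    intro r j
    rw [hL]; simp [Matrix.sum_apply]
  have hLhom : ∀ r j, (L r j).IsHomogeneous 1 := by
    intro r j
    rw [hLe]
    refine IsHomogeneous.sum _ _ _ fun i _ => ?_
    simpa using (isHomogeneous_X (ZMod 2) i).mul (isHomogeneous_C (Fin n) (Ls i r j))
  have hDL : ∀ r j, glrD n (L r j) = ∑ i, X i ^ 2 * C (Ls i r j) := by
    intro r j
    rw [hLe, map_sum]
    refine Finset.sum_congr rfl fun i _ => ?_
    rw [Derivation.leibniz]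
    simp [glrD, mul_comm]
  have hrow : ∀ r, ∑ k, L r k * assocPoly Q k = glrD n (assocPoly Q r) := by
    intro r
    have := congrFun hLq r
    rw [glrD_apply] at this
    exact this
  have hrel : ∀ r, ∑ j, (glrD n (L r j) + ∑ k, L r k * L k j) * assocPoly Q j = 0 := by
    intro r
    have h := congrArg (glrD n) (hrow r)
    rw [glrD_sq, map_sum] at h
    rw [← h]
    simp only [Derivation.leibniz, smul_eq_mul, add_mul, Finset.sum_add_distrib, ← hrow]
    rw [add_comm]
    congr 1
    · simp only [Finset.mul_sum, Finset.sum_mul]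
      rw [Finset.sum_comm]
      simp only [mul_assoc]
    · exact Finset.sum_congr rfl fun _ _ => mul_comm _ _
  have key : ∀ r j, ∃ c : Fin n → ZMod 2,
      glrD n (L r j) + ∑ k, L r k * L k j = ∑ k, C (c k) * assocPoly Q k := by
    intro r
    refine glr_span (fun k => glr_hom Q k) hreg _ (fun j => ?_) (hrel r)
    refine IsHomogeneous.add ?_ (IsHomogeneous.sum _ _ _ fun k _ => (hLhom r k).mul (hLhom k j))
    rw [hDL]
    refine IsHomogeneous.sum _ _ _ fun i _ => ?_
    simpa using ((isHomogeneous_X (ZMod 2) i).pow 2).mul (isHomogeneous_C (Fin n) (Ls i r j))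
  have z2 : ∀ a : ZMod 2, a ^ 2 = a := by decide
  have hev : ∀ (w : Fin n → ZMod 2) r j,
      eval w (glrD n (L r j) + ∑ k, L r k * L k j) =
      ((∑ i : Fin n, w i • Ls i) +
        (∑ i : Fin n, w i • Ls i) * (∑ i : Fin n, w i • Ls i)) r j := by
    intro w r j
    rw [hDL]
    simp [hLe, Matrix.mul_apply, Matrix.sum_apply, z2]
  intro w
  ext r j
  obtain ⟨c, hc⟩ := key r j
  have hc' : ∀ w : Fin n → ZMod 2, ((∑ i : Fin n, w i • Ls i) +
        (∑ i : Fin n, w i • Ls i) * (∑ i : Fin n, w i • Ls i)) r j = ∑ k, c k * Q w k := by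
    intro w
    rw [← hev, hc]
    simp [glr_eval hQ]
  rw [hc', Matrix.sum_apply]
  refine Finset.sum_congr rfl fun i _ => ?_
  have hi := hc' (Pi.single i 1)
  rw [hbij] at hi
  have e1 : (∑ k : Fin n, (Pi.single i 1 : Fin n → ZMod 2) k • Ls k) = Ls i := by
    simp [Pi.single_apply]
  have e2 : ∑ k, c k * (Pi.single i 1 : Fin n → ZMod 2) k = c i := by
    simp [Pi.single_apply]
  rw [e1, e2] at hi
  rw [← hi, Matrix.smul_apply, smul_eq_mul, mul_comm, add_comm (Ls i)]
end
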